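/- Under the adapted pure-frontal setup with focal data, assume κ_t(0) ≠ 0, that the secondary cuspidal curvature vanishes identically along the singular curve (r_c(u) = 0 for all u near 0), and that 0 is a first order V_j-ridge point of f ((V_jκ_j)(0) = 0 and (V_jV_jκ_j)(0) ≠ 0). Then, near 0, the singular set of the focal surface C_j equals {v = 0}, every point (u,0) is a pure-frontal singular point of C_j (i.e. d(e_j)(V_j) = 0 at every point of the u-axis, where e_j = x_j/‖x_j‖ is the unit normal of C_j), and the Gaussian curvature and mean curvature of C_j, defined on the regular set of C_j via the unit normal e_j, are bounded on a neighborhood of 0. -/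

import Mathlib

open Filter

noncomputable section

/-- Vectors in ℝ³, modeled as `Fin 3 → ℝ`. -/
abbrev R3 : Type := Fin 3 → ℝ

/-- The Euclidean inner product on ℝ³. -/
def dot3 (a b : R3) : ℝ := a 0 * b 0 + a 1 * b 1 + a 2 * b 2

/-- The Euclidean norm on ℝ³. -/
def norm3 (a : R3) : ℝ := Real.sqrt (dot3 a a)

/-- Partial derivative in the `u`-direction. -/
def pu {E : Type*} [NormedAddCommGroup E] [NormedSpace ℝ E] (F : ℝ × ℝ → E) (p : ℝ × ℝ) : E :=
  fderiv ℝ F p (1, 0)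

/-- Partial derivative in the `v`-direction. -/
def pv {E : Type*} [NormedAddCommGroup E] [NormedSpace ℝ E] (F : ℝ × ℝ → E) (p : ℝ × ℝ) : E :=
  fderiv ℝ F p (0, 1)

/-- The adapted pure-frontal setup: `f` is a frontal with unit normal `ν`,
`f_v = v·h`, `ν_v = v·ν₁`, the frame `{f_u, h, ν}` is linearly independent everywhere
and orthonormal along the `u`-axis. -/
structure AdaptedPureFrontal (f ν h ν₁ : ℝ × ℝ → R3) : Prop where
  smooth_f : ContDiff ℝ (⊤ : ℕ∞) f
  smooth_ν : ContDiff ℝ (⊤ : ℕ∞) ν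
  smooth_h : ContDiff ℝ (⊤ : ℕ∞) h
  smooth_ν₁ : ContDiff ℝ (⊤ : ℕ∞) ν₁
  unit_ν : ∀ p, dot3 (ν p) (ν p) = 1
  orth_fu_ν : ∀ p, dot3 (pu f p) (ν p) = 0
  orth_fv_ν : ∀ p, dot3 (pv f p) (ν p) = 0
  fv_eq : ∀ p : ℝ × ℝ, pv f p = p.2 • h p
  νv_eq : ∀ p : ℝ × ℝ, pv ν p = p.2 • ν₁ p
  indep : ∀ p, LinearIndependent ℝ ![pu f p, h p, ν p]
  adapted_fu : ∀ u : ℝ, dot3 (pu f (u, 0)) (pu f (u, 0)) = 1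
  adapted_h : ∀ u : ℝ, dot3 (h (u, 0)) (h (u, 0)) = 1
  adapted_fu_h : ∀ u : ℝ, dot3 (pu f (u, 0)) (h (u, 0)) = 0
  adapted_h_ν : ∀ u : ℝ, dot3 (h (u, 0)) (ν (u, 0)) = 0

/-- Ẽ = ⟨f_u, f_u⟩. -/
def Et (f : ℝ × ℝ → R3) (p : ℝ × ℝ) : ℝ := dot3 (pu f p) (pu f p)

/-- F̃ = ⟨f_u, h⟩. -/
def Ft (f h : ℝ × ℝ → R3) (p : ℝ × ℝ) : ℝ := dot3 (pu f p) (h p)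

/-- G̃ = ⟨h, h⟩. -/
def Gt (h : ℝ × ℝ → R3) (p : ℝ × ℝ) : ℝ := dot3 (h p) (h p)

/-- L̃ = −⟨f_u, ν_u⟩. -/
def Lt (f ν : ℝ × ℝ → R3) (p : ℝ × ℝ) : ℝ := -dot3 (pu f p) (pu ν p)

/-- M̃ = −⟨h, ν_u⟩. -/
def Mt (h ν : ℝ × ℝ → R3) (p : ℝ × ℝ) : ℝ := -dot3 (h p) (pu ν p)

/-- Ñ₁ = −⟨h, ν₁⟩. -/
def Nt1 (h ν₁ : ℝ × ℝ → R3) (p : ℝ × ℝ) : ℝ := -dot3 (h p) (ν₁ p)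

/-- The Gaussian curvature K = (L̃Ñ₁ − M̃²)/(ẼG̃ − F̃²). -/
def Kg (f ν h ν₁ : ℝ × ℝ → R3) (p : ℝ × ℝ) : ℝ :=
  (Lt f ν p * Nt1 h ν₁ p - Mt h ν p ^ 2) / (Et f p * Gt h p - Ft f h p ^ 2)

/-- The mean curvature H = (ẼÑ₁ − 2F̃M̃ + G̃L̃)/(2(ẼG̃ − F̃²)). -/
def Hm (f ν h ν₁ : ℝ × ℝ → R3) (p : ℝ × ℝ) : ℝ :=
  (Et f p * Nt1 h ν₁ p - 2 * Ft f h p * Mt h ν p + Gt h p * Lt f ν p) /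
    (2 * (Et f p * Gt h p - Ft f h p ^ 2))

/-- The principal curvature κ = H + ε√(H² − K); `ε = 1` gives κ₁ and `ε = -1` gives κ₂. -/
def kap (f ν h ν₁ : ℝ × ℝ → R3) (ε : ℝ) (p : ℝ × ℝ) : ℝ :=
  Hm f ν h ν₁ p + ε * Real.sqrt (Hm f ν h ν₁ p ^ 2 - Kg f ν h ν₁ p)

/-- First component of the principal vector field V = −v(M̃ − κF̃)∂_u + (L̃ − κẼ)∂_v. -/
def V1c (f ν h ν₁ : ℝ × ℝ → R3) (ε : ℝ) (p : ℝ × ℝ) : ℝ :=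
  -(p.2 * (Mt h ν p - kap f ν h ν₁ ε p * Ft f h p))

/-- Second component of the principal vector field V = −v(M̃ − κF̃)∂_u + (L̃ − κẼ)∂_v. -/
def V2c (f ν h ν₁ : ℝ × ℝ → R3) (ε : ℝ) (p : ℝ × ℝ) : ℝ :=
  Lt f ν p - kap f ν h ν₁ ε p * Et f p

/-- Directional derivative of `g` along the principal vector field V. -/
def VD (f ν h ν₁ : ℝ × ℝ → R3) (ε : ℝ) {E : Type*} [NormedAddCommGroup E] [NormedSpace ℝ E]
    (g : ℝ × ℝ → E) (p : ℝ × ℝ) : E :=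
  V1c f ν h ν₁ ε p • pu g p + V2c f ν h ν₁ ε p • pv g p

/-- The radius of principal curvature ρ = 1/κ. -/
def rho (f ν h ν₁ : ℝ × ℝ → R3) (ε : ℝ) (p : ℝ × ℝ) : ℝ := (kap f ν h ν₁ ε p)⁻¹

/-- The focal surface C = f + ρ·ν. -/
def Cf (f ν h ν₁ : ℝ × ℝ → R3) (ε : ℝ) (p : ℝ × ℝ) : R3 :=
  f p + rho f ν h ν₁ ε p • ν p

/-- The normal direction x = −(M̃ − κF̃)·f_u + (L̃ − κẼ)·h of the focal surface. -/
def xj (f ν h ν₁ : ℝ × ℝ → R3) (ε : ℝ) (p : ℝ × ℝ) : R3 :=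
  (-(Mt h ν p - kap f ν h ν₁ ε p * Ft f h p)) • pu f p +
    (Lt f ν p - kap f ν h ν₁ ε p * Et f p) • h p

/-- The unit normal e = x/‖x‖ of the focal surface. -/
def ej (f ν h ν₁ : ℝ × ℝ → R3) (ε : ℝ) (p : ℝ × ℝ) : R3 :=
  (norm3 (xj f ν h ν₁ ε p))⁻¹ • xj f ν h ν₁ ε p

/-- The limiting normal curvature κ_ν(u) = L̃(u,0). -/
def kν (f ν : ℝ × ℝ → R3) (u : ℝ) : ℝ := Lt f ν (u, 0)

/-- The cuspidal torsion κ_t(u) = M̃(u,0). -/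
def kt (h ν : ℝ × ℝ → R3) (u : ℝ) : ℝ := Mt h ν (u, 0)

/-- The bias r_b(u) = 3Ñ₁(u,0). -/
def rb (h ν₁ : ℝ × ℝ → R3) (u : ℝ) : ℝ := 3 * Nt1 h ν₁ (u, 0)

/-- The secondary cuspidal curvature r_c(u) = 24((Ñ₁)_v − 2F̃_vM̃ − G̃_vÑ₁)(u,0). -/
def rc (f ν h ν₁ : ℝ × ℝ → R3) (u : ℝ) : ℝ :=
  24 * (pv (Nt1 h ν₁) (u, 0) - 2 * pv (Ft f h) (u, 0) * Mt h ν (u, 0) -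
    pv (Gt h) (u, 0) * Nt1 h ν₁ (u, 0))

/-- The singular curvature κ_s(u) = ⟨f_uu, h⟩(u,0). -/
def ks (f h : ℝ × ℝ → R3) (u : ℝ) : ℝ := dot3 (pu (pu f) (u, 0)) (h (u, 0))

/-- The rank of the differential of `F` at `p`. -/
def rankAt (F : ℝ × ℝ → R3) (p : ℝ × ℝ) : ℕ :=
  Module.finrank ℝ (LinearMap.range (fderiv ℝ F p).toLinearMap)

/-- E^C = ⟨(C_j)_u, (C_j)_u⟩, first fundamental form of the focal surface. -/
def EC (f ν h ν₁ : ℝ × ℝ → R3) (ε : ℝ) (p : ℝ × ℝ) : ℝ :=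
  dot3 (pu (Cf f ν h ν₁ ε) p) (pu (Cf f ν h ν₁ ε) p)

/-- F^C = ⟨(C_j)_u, (C_j)_v⟩. -/
def FC (f ν h ν₁ : ℝ × ℝ → R3) (ε : ℝ) (p : ℝ × ℝ) : ℝ :=
  dot3 (pu (Cf f ν h ν₁ ε) p) (pv (Cf f ν h ν₁ ε) p)

/-- G^C = ⟨(C_j)_v, (C_j)_v⟩. -/
def GC (f ν h ν₁ : ℝ × ℝ → R3) (ε : ℝ) (p : ℝ × ℝ) : ℝ :=
  dot3 (pv (Cf f ν h ν₁ ε) p) (pv (Cf f ν h ν₁ ε) p)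

/-- L^C = −⟨(C_j)_u, (e_j)_u⟩, second fundamental form of the focal surface. -/
def LC (f ν h ν₁ : ℝ × ℝ → R3) (ε : ℝ) (p : ℝ × ℝ) : ℝ :=
  -dot3 (pu (Cf f ν h ν₁ ε) p) (pu (ej f ν h ν₁ ε) p)

/-- M^C = −⟨(C_j)_v, (e_j)_u⟩. -/
def MC (f ν h ν₁ : ℝ × ℝ → R3) (ε : ℝ) (p : ℝ × ℝ) : ℝ :=
  -dot3 (pv (Cf f ν h ν₁ ε) p) (pu (ej f ν h ν₁ ε) p)

/-- N^C = −⟨(C_j)_v, (e_j)_v⟩. -/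
def NC (f ν h ν₁ : ℝ × ℝ → R3) (ε : ℝ) (p : ℝ × ℝ) : ℝ :=
  -dot3 (pv (Cf f ν h ν₁ ε) p) (pv (ej f ν h ν₁ ε) p)

/-- The Gaussian curvature of the focal surface C_j, computed with unit normal e_j. -/
def KC (f ν h ν₁ : ℝ × ℝ → R3) (ε : ℝ) (p : ℝ × ℝ) : ℝ :=
  (LC f ν h ν₁ ε p * NC f ν h ν₁ ε p - MC f ν h ν₁ ε p ^ 2) /
    (EC f ν h ν₁ ε p * GC f ν h ν₁ ε p - FC f ν h ν₁ ε p ^ 2)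

/-- The mean curvature of the focal surface C_j, computed with unit normal e_j. -/
def HC (f ν h ν₁ : ℝ × ℝ → R3) (ε : ℝ) (p : ℝ × ℝ) : ℝ :=
  (EC f ν h ν₁ ε p * NC f ν h ν₁ ε p - 2 * FC f ν h ν₁ ε p * MC f ν h ν₁ ε p +
      GC f ν h ν₁ ε p * LC f ν h ν₁ ε p) /
    (2 * (EC f ν h ν₁ ε p * GC f ν h ν₁ ε p - FC f ν h ν₁ ε p ^ 2))

/-!
Rodrigues' formula `Vν = -κ Vf` for the principal field `V` gives `VC = (Vρ) ν` for the focal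
surface `C = f + ρν`; hence `C` is singular exactly where `Vρ = 0`, and the Gram determinant of `C`
is comparable to `(Vρ)²`. Along `v = 0`, differentiating the characteristic equation of `κ` in `v`
shows that `κ_v` is a multiple of `r_c`. So if `r_c ≡ 0`, then `κ_v`, `Vρ` and `C_v` vanish on the
axis, while `x_v` is parallel to `x`, so that `e_v` vanishes there too. At a first order ridge `Vρ`
vanishes only to first order, so the Gram determinant is bounded below by a multiple of `v²`. The
numerators of both curvatures are `O(v²)`, because `C_v` and `e_v` are `O(v)`.
-/

open Asymptotics
open scoped Topology ContDiff Matrix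

theorem eq_of_forall_dotProduct_eq {n K : Type*} [Fintype n] [Field K] {b : n → n → K}
    (hb : LinearIndependent K b) {z w : n → K}
    (h : ∀ i, b i ⬝ᵥ z = b i ⬝ᵥ w) : z = w := by
  classical
  exact Matrix.mulVec_injective_of_isUnit (A := Matrix.of b)
    (Matrix.linearIndependent_rows_iff_isUnit.mp hb) (funext h)

section Dot3

theorem dot3_eq_dotProduct (a b : R3) : dot3 a b = a ⬝ᵥ b :=
  (Matrix.vec3_dotProduct a b).symm

theorem dot3_comm (a b : R3) : dot3 a b = dot3 b a := by
  simp only [dot3_eq_dotProduct, dotProduct_comm]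

theorem dot3_add_left (a b c : R3) : dot3 (a + b) c = dot3 a c + dot3 b c := by
  simp only [dot3_eq_dotProduct, add_dotProduct]

theorem dot3_add_right (a b c : R3) : dot3 a (b + c) = dot3 a b + dot3 a c := by
  simp only [dot3_eq_dotProduct, dotProduct_add]

theorem dot3_smul_left (r : ℝ) (a b : R3) : dot3 (r • a) b = r * dot3 a b := by
  simp only [dot3_eq_dotProduct, smul_dotProduct, smul_eq_mul]

theorem dot3_smul_right (r : ℝ) (a b : R3) : dot3 a (r • b) = r * dot3 a b := by
  simp only [dot3_eq_dotProduct, dotProduct_smul, smul_eq_mul]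

theorem dot3_zero_left (a : R3) : dot3 0 a = 0 := by
  rw [dot3_eq_dotProduct, zero_dotProduct]

theorem dot3_zero_right (a : R3) : dot3 a 0 = 0 := by
  rw [dot3_eq_dotProduct, dotProduct_zero]

theorem dot3_self_pos {a : R3} (ha : a ≠ 0) : 0 < dot3 a a := by
  have hne : dot3 a a ≠ 0 := by rwa [dot3_eq_dotProduct, Ne, dotProduct_self_eq_zero]
  have hnonneg : 0 ≤ dot3 a a := by
    unfold dot3
    nlinarith [sq_nonneg (a 0), sq_nonneg (a 1), sq_nonneg (a 2)]
  exact hnonneg.lt_of_ne' hne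

theorem dot3_gram_ne_zero {a b : R3} (hab : LinearIndependent ℝ ![a, b]) :
    dot3 a a * dot3 b b - dot3 a b ^ 2 ≠ 0 := by
  have hcross := dot3_self_pos (crossProduct_ne_zero_iff_linearIndependent.mpr hab)
  rw [dot3_eq_dotProduct, cross_dot_cross, dotProduct_comm b a] at hcross
  simpa only [dot3_eq_dotProduct, sq] using hcross.ne'

/-- Cross the hypothesis with `a` and compare squared norms. -/
theorem dot3_gram_of_smul_add_smul_eq {a b n : R3} {x y w : ℝ} (h : x • a + y • b = w • n) :
    y ^ 2 * (dot3 a a * dot3 b b - dot3 a b ^ 2) =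
      w ^ 2 * (dot3 a a * dot3 n n - dot3 a n ^ 2) := by
  have hcross : y • (a ⨯₃ b) = w • (a ⨯₃ n) := by
    simpa using congrArg (a ⨯₃ ·) h
  have hsq := congrArg (fun z => dot3 z z) hcross
  simp only [dot3_smul_left, dot3_smul_right] at hsq
  simp only [dot3_eq_dotProduct, cross_dot_cross] at hsq ⊢
  rw [dotProduct_comm b a, dotProduct_comm n a] at hsq
  linear_combination hsq

theorem isBoundedBilinearMap_dot3 : IsBoundedBilinearMap ℝ fun x : R3 × R3 => dot3 x.1 x.2 where
  add_left := dot3_add_left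
  smul_left := dot3_smul_left
  add_right := dot3_add_right
  smul_right r a b := dot3_smul_right r a b
  bound := by
    refine ⟨3, by norm_num, fun a b => ?_⟩
    have hcoord (i : Fin 3) : ‖a i * b i‖ ≤ ‖a‖ * ‖b‖ := by
      rw [norm_mul]
      gcongr <;> exact norm_le_pi_norm _ i
    calc ‖dot3 a b‖ ≤ ‖a 0 * b 0‖ + ‖a 1 * b 1‖ + ‖a 2 * b 2‖ := norm_add₃_le
      _ ≤ 3 * ‖a‖ * ‖b‖ := by linarith [hcoord 0, hcoord 1, hcoord 2]

theorem fderiv_dot3 {X : Type*} [NormedAddCommGroup X] [NormedSpace ℝ X] {a b : X → R3} {p : X}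
    (ha : DifferentiableAt ℝ a p) (hb : DifferentiableAt ℝ b p) (w : X) :
    fderiv ℝ (fun q => dot3 (a q) (b q)) p w =
      dot3 (a p) (fderiv ℝ b p w) + dot3 (fderiv ℝ a p w) (b p) := by
  have hcomp := (isBoundedBilinearMap_dot3.hasFDerivAt (a p, b p)).comp p
    (ha.hasFDerivAt.prodMk hb.hasFDerivAt)
  exact congrArg (· w) hcomp.fderiv

theorem dot3_fderiv_eq_neg_of_const {X : Type*} [NormedAddCommGroup X] [NormedSpace ℝ X]
    {a b : X → R3} {p : X} {c : ℝ} (ha : DifferentiableAt ℝ a p) (hb : DifferentiableAt ℝ b p)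
    (hab : ∀ q, dot3 (a q) (b q) = c) (w : X) :
    dot3 (a p) (fderiv ℝ b p w) = -dot3 (fderiv ℝ a p w) (b p) := by
  have hproduct := fderiv_dot3 ha hb w
  simp only [hab, fderiv_fun_const, Pi.zero_apply, zero_apply] at hproduct
  exact eq_neg_of_add_eq_zero_left hproduct.symm

theorem hasDerivAt_dot3 {a b : ℝ → R3} {a' b' : R3} {t : ℝ}
    (ha : HasDerivAt a a' t) (hb : HasDerivAt b b' t) :
    HasDerivAt (fun s => dot3 (a s) (b s)) (dot3 (a t) b' + dot3 a' (b t)) t :=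
  HasFDerivAt.comp_hasDerivAt (f := fun s => (a s, b s)) t
    (isBoundedBilinearMap_dot3.hasFDerivAt (a t, b t)) (ha.prodMk hb)

theorem contDiffAt_dot3 {X : Type*} [NormedAddCommGroup X] [NormedSpace ℝ X] {a b : X → R3} {p : X}
    {n : WithTop ℕ∞} (ha : ContDiffAt ℝ n a p) (hb : ContDiffAt ℝ n b p) :
    ContDiffAt ℝ n (fun q => dot3 (a q) (b q)) p :=
  isBoundedBilinearMap_dot3.contDiff.contDiffAt.comp p (ha.prodMk hb)

theorem isBigO_dot3 {α : Type*} {l : Filter α} {a b : α → R3} {r s : α → ℝ}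
    (ha : a =O[l] r) (hb : b =O[l] s) : (fun p => dot3 (a p) (b p)) =O[l] fun p => r p * s p :=
  isBoundedBilinearMap_dot3.isBigO_comp.trans (ha.norm_left.mul hb.norm_left)

theorem isBigO_gauss_numerator {α : Type*} {l : Filter α} {a b c d : α → R3} {r : α → ℝ}
    (ha : a =O[l] fun _ => (1 : ℝ)) (hb : b =O[l] r) (hc : c =O[l] fun _ => (1 : ℝ))
    (hd : d =O[l] r) :
    (fun p => -dot3 (a p) (c p) * -dot3 (b p) (d p) - (-dot3 (b p) (c p)) ^ 2)
      =O[l] fun p => r p ^ 2 := by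
  have hac_bd := (isBigO_dot3 ha hc).neg_left.mul (isBigO_dot3 hb hd).neg_left
  have hbc_sq := (isBigO_dot3 hb hc).neg_left.pow 2
  simp only [mul_one, one_mul, one_pow, ← sq] at hac_bd hbc_sq
  exact hac_bd.sub hbc_sq

theorem isBigO_mean_numerator {α : Type*} {l : Filter α} {a b c d : α → R3} {r : α → ℝ}
    (ha : a =O[l] fun _ => (1 : ℝ)) (hb : b =O[l] r) (hc : c =O[l] fun _ => (1 : ℝ))
    (hd : d =O[l] r) :
    (fun p => dot3 (a p) (a p) * -dot3 (b p) (d p) - 2 * dot3 (a p) (b p) * -dot3 (b p) (c p) +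
      dot3 (b p) (b p) * -dot3 (a p) (c p)) =O[l] fun p => r p ^ 2 := by
  have haa_bd := (isBigO_dot3 ha ha).mul (isBigO_dot3 hb hd).neg_left
  have hab_bc := ((isBigO_dot3 ha hb).const_mul_left 2).mul (isBigO_dot3 hb hc).neg_left
  have hbb_ac := (isBigO_dot3 hb hb).mul (isBigO_dot3 ha hc).neg_left
  simp only [mul_one, one_mul, one_pow, ← sq] at haa_bd hab_bc hbb_ac
  exact (haa_bd.sub hab_bc).add hbb_ac

theorem hasDerivAt_normalize_of_deriv_parallel {x : ℝ → R3} {c t : ℝ}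
    (hx : HasDerivAt x (c • x t) t) (h0 : x t ≠ 0) :
    HasDerivAt (fun s => (norm3 (x s))⁻¹ • x s) 0 t := by
  have hpos := dot3_self_pos h0
  have hnorm : 0 < norm3 (x t) := Real.sqrt_pos.mpr hpos
  have hsq : norm3 (x t) ^ 2 = dot3 (x t) (x t) := Real.sq_sqrt hpos.le
  have hnorm_deriv : HasDerivAt (fun s => norm3 (x s)) (c * norm3 (x t)) t := by
    convert! (hasDerivAt_dot3 hx hx).sqrt hpos.ne' using 1
    change _ = _ / (2 * norm3 (x t))
    rw [dot3_smul_left, dot3_smul_right, ← hsq]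
    field_simp
    ring
  convert! (hnorm_deriv.inv hnorm.ne').smul hx using 1
  have hcoeff : (norm3 (x t))⁻¹ * c + -(c * norm3 (x t)) / norm3 (x t) ^ 2 = 0 := by
    field_simp
    ring
  rw [smul_smul, ← add_smul, Pi.inv_apply, hcoeff, zero_smul]

end Dot3

section PartialDerivatives

variable {W : Type*} [NormedAddCommGroup W] [NormedSpace ℝ W] {g : ℝ × ℝ → W} {p : ℝ × ℝ}

theorem hasDerivAt_pu (hg : DifferentiableAt ℝ g p) :
    HasDerivAt (fun s => g (s, p.2)) (pu g p) p.1 :=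
  hg.hasFDerivAt.comp_hasDerivAt p.1 ((hasDerivAt_id _).prodMk (hasDerivAt_const _ _))

theorem hasDerivAt_pv (hg : DifferentiableAt ℝ g p) :
    HasDerivAt (fun t => g (p.1, t)) (pv g p) p.2 :=
  hg.hasFDerivAt.comp_hasDerivAt p.2 ((hasDerivAt_const _ _).prodMk (hasDerivAt_id _))

theorem pv_fun_neg (g : ℝ × ℝ → W) (p : ℝ × ℝ) : pv (fun q => -g q) p = -pv g p :=
  congrArg (fun T : ℝ × ℝ →L[ℝ] W => T (0, 1)) fderiv_fun_neg

theorem contDiffAt_fderiv_apply_const (hg : ContDiffAt ℝ ∞ g p) (w : ℝ × ℝ) :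
    ContDiffAt ℝ ∞ (fun q => fderiv ℝ g q w) p :=
  (hg.fderiv_right le_rfl).clm_apply contDiffAt_const

theorem contDiffAt_pu (hg : ContDiffAt ℝ ∞ g p) : ContDiffAt ℝ ∞ (pu g) p :=
  contDiffAt_fderiv_apply_const hg _

theorem contDiffAt_pv (hg : ContDiffAt ℝ ∞ g p) : ContDiffAt ℝ ∞ (pv g) p :=
  contDiffAt_fderiv_apply_const hg _

theorem pv_pu_eq_pu_pv (hg : ContDiffAt ℝ 2 g p) : pv (pu g) p = pu (pv g) p := by
  have hfderiv : DifferentiableAt ℝ (fderiv ℝ g) p :=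
    (hg.fderiv_right (m := 1) (by norm_num)).differentiableAt one_ne_zero
  have hsecond (w z : ℝ × ℝ) :
      fderiv ℝ (fun q => fderiv ℝ g q w) p z = fderiv ℝ (fderiv ℝ g) p z w := by
    rw [fderiv_clm_apply hfderiv (differentiableAt_const w)]
    simp
  have hsymm : IsSymmSndFDerivAt ℝ g p := hg.isSymmSndFDerivAt (by simp)
  exact (hsecond _ _).trans ((hsymm _ _).trans (hsecond _ _).symm)

theorem pv_pu_eq_zero_of_pv_axis_eq_zero {u : ℝ} (hg : ContDiffAt ℝ 2 g (u, 0))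
    (h0 : ∀ᶠ s in 𝓝 u, pv g (s, 0) = 0) : pv (pu g) (u, 0) = 0 := by
  have hpv : DifferentiableAt ℝ (pv g) (u, 0) :=
    ((hg.fderiv_right (m := 1) (by norm_num)).clm_apply contDiffAt_const).differentiableAt
      one_ne_zero
  rw [pv_pu_eq_pu_pv hg]
  exact (hasDerivAt_pu hpv).unique ((hasDerivAt_const u (0 : W)).congr_of_eventuallyEq h0)

end PartialDerivatives

section VanishingOnAxis

variable {X Y E : Type*} [NormedAddCommGroup X] [NormedSpace ℝ X] [NormedAddCommGroup Y]
  [NormedSpace ℝ Y] [NormedAddCommGroup E] [NormedSpace ℝ E] {a : X}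

theorem isLittleO_sub_fderiv_snd_of_axis_eq_zero {g : X × Y → E} {g' : X × Y →L[ℝ] E}
    (hg : HasStrictFDerivAt g g' (a, 0)) (h0 : ∀ᶠ x in 𝓝 a, g (x, 0) = 0) :
    (fun p => g p - g' (0, p.2)) =o[𝓝 (a, 0)] Prod.snd := by
  have hproj : Tendsto (fun p : X × Y => (p, (p.1, (0 : Y)))) (𝓝 (a, 0)) (𝓝 ((a, 0), (a, 0))) :=
    Continuous.tendsto' (by fun_prop) _ _ rfl
  have h0' : ∀ᶠ p in 𝓝 (a, (0 : Y)), g (p.1, 0) = 0 :=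
    (continuous_fst.tendsto (a, (0 : Y))).eventually h0
  refine (hg.isLittleO.comp_tendsto hproj).congr' ?_ .rfl |>.trans_isBigO ?_
  · filter_upwards [h0'] with p hp
    have hsub : p - (p.1, 0) = (0, p.2) := by ext <;> simp
    simp only [Function.comp_apply, hp, sub_zero, hsub]
  · exact IsBigO.of_bound 1 (.of_forall fun p => by simp [Prod.norm_def])

theorem isBigO_snd_of_axis_eq_zero {g : X × Y → E} {g' : X × Y →L[ℝ] E}
    (hg : HasStrictFDerivAt g g' (a, 0)) (h0 : ∀ᶠ x in 𝓝 a, g (x, 0) = 0) :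
    g =O[𝓝 (a, 0)] Prod.snd := by
  have hlin : (fun p : X × Y => g' (0, p.2)) =O[𝓝 (a, 0)] Prod.snd :=
    ((g'.comp (.inr ℝ X Y)).isBigO_comp Prod.snd _)
  simpa using (isLittleO_sub_fderiv_snd_of_axis_eq_zero hg h0).isBigO.add hlin

theorem snd_isBigO_of_axis_eq_zero {g : X × ℝ → E} {g' : X × ℝ →L[ℝ] E}
    (hg : HasStrictFDerivAt g g' (a, 0)) (h0 : ∀ᶠ x in 𝓝 a, g (x, 0) = 0) (h1 : g' (0, 1) ≠ 0) :
    Prod.snd =O[𝓝 (a, 0)] g := by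
  have hlin (v : ℝ) : g' (0, v) = v • g' (0, 1) := by
    rw [← map_smul, Prod.smul_mk, smul_zero, smul_eq_mul, mul_one]
  have hsnd : Prod.snd =O[𝓝 (a, 0)] fun p : X × ℝ => g' (0, p.2) := by
    refine .of_bound ‖g' (0, 1)‖⁻¹ (.of_forall fun p => ?_)
    rw [hlin p.2, norm_smul, mul_comm, mul_assoc, mul_inv_cancel₀ (norm_ne_zero_iff.mpr h1),
      mul_one]
  have hequiv : g ~[𝓝 (a, 0)] fun p => g' (0, p.2) :=
    (isLittleO_sub_fderiv_snd_of_axis_eq_zero hg h0).trans_isBigO hsnd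
  exact hsnd.trans hequiv.isBigO_symm

end VanishingOnAxis

namespace AdaptedPureFrontal

variable {f ν h ν₁ : ℝ × ℝ → R3} {ε u : ℝ} {p : ℝ × ℝ}

local notation "E" => Et f
local notation "F" => Ft f h
local notation "G" => Gt h
local notation "L" => Lt f ν
local notation "M" => Mt h ν
local notation "N" => Nt1 h ν₁
local notation "𝓚" => Kg f ν h ν₁
local notation "𝓗" => Hm f ν h ν₁
local notation "κ" => kap f ν h ν₁ ε
local notation "ρ" => rho f ν h ν₁ ε
local notation "V₁" => V1c f ν h ν₁ ε
local notation "V₂" => V2c f ν h ν₁ ε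
local notation "V" => VD f ν h ν₁ ε
local notation "C" => Cf f ν h ν₁ ε
local notation "𝐱" => xj f ν h ν₁ ε
local notation "𝐞" => ej f ν h ν₁ ε

section Frame

theorem eq_of_forall_dot3_frame_eq (H : AdaptedPureFrontal f ν h ν₁) {z w : R3}
    (hfu : dot3 (pu f p) z = dot3 (pu f p) w) (hh : dot3 (h p) z = dot3 (h p) w)
    (hν : dot3 (ν p) z = dot3 (ν p) w) : z = w := by
  refine eq_of_forall_dotProduct_eq (H.indep p) fun i => ?_
  simp only [dot3_eq_dotProduct] at hfu hh hν
  fin_cases i <;> assumption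

theorem linearIndependent_fu_h (H : AdaptedPureFrontal f ν h ν₁) (p : ℝ × ℝ) :
    LinearIndependent ℝ ![pu f p, h p] := by
  convert! (H.indep p).comp ![0, 1] (by decide) using 1
  ext i : 1
  fin_cases i <;> rfl

theorem metric_det_ne_zero (H : AdaptedPureFrontal f ν h ν₁) (p : ℝ × ℝ) :
    E p * G p - F p ^ 2 ≠ 0 :=
  dot3_gram_ne_zero (H.linearIndependent_fu_h p)

theorem differentiableAt_ν (H : AdaptedPureFrontal f ν h ν₁) : DifferentiableAt ℝ ν p :=
  H.smooth_ν.differentiable (by simp) p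

theorem differentiableAt_h (H : AdaptedPureFrontal f ν h ν₁) : DifferentiableAt ℝ h p :=
  H.smooth_h.differentiable (by simp) p

theorem differentiableAt_pu_f (H : AdaptedPureFrontal f ν h ν₁) : DifferentiableAt ℝ (pu f) p :=
  (contDiffAt_pu H.smooth_f.contDiffAt).differentiableAt (by simp)

theorem differentiableAt_pu_ν (H : AdaptedPureFrontal f ν h ν₁) : DifferentiableAt ℝ (pu ν) p :=
  (contDiffAt_pu H.smooth_ν.contDiffAt).differentiableAt (by simp)

theorem dot3_h_ν (H : AdaptedPureFrontal f ν h ν₁) (p : ℝ × ℝ) : dot3 (h p) (ν p) = 0 := by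
  obtain ⟨u, v⟩ := p
  rcases eq_or_ne v 0 with rfl | hv
  · exact H.adapted_h_ν u
  · have hfv := H.orth_fv_ν (u, v)
    rw [H.fv_eq, dot3_smul_left] at hfv
    exact (mul_eq_zero.mp hfv).resolve_left hv

theorem dot3_ν_fderiv_ν (H : AdaptedPureFrontal f ν h ν₁) (p w : ℝ × ℝ) :
    dot3 (ν p) (fderiv ℝ ν p w) = 0 := by
  have hν : DifferentiableAt ℝ ν p := H.differentiableAt_ν
  have hneg := dot3_fderiv_eq_neg_of_const hν hν H.unit_ν w
  rw [dot3_comm (fderiv ℝ ν p w)] at hneg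
  exact self_eq_neg.mp hneg

theorem dot3_fu_νv (H : AdaptedPureFrontal f ν h ν₁) (p : ℝ × ℝ) :
    dot3 (pu f p) (pv ν p) = -(p.2 * M p) := by
  have hf := H.smooth_f.contDiffAt (x := p)
  have hfv := (contDiffAt_pv hf).differentiableAt (by simp)
  calc dot3 (pu f p) (pv ν p) = -dot3 (pv (pu f) p) (ν p) :=
        dot3_fderiv_eq_neg_of_const H.differentiableAt_pu_f H.differentiableAt_ν H.orth_fu_ν _
    _ = -dot3 (pu (pv f) p) (ν p) := by rw [pv_pu_eq_pu_pv (hf.of_le (by norm_cast))]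
    _ = dot3 (pv f p) (pu ν p) :=
        (dot3_fderiv_eq_neg_of_const hfv H.differentiableAt_ν H.orth_fv_ν _).symm
    _ = -(p.2 * M p) := by rw [H.fv_eq, dot3_smul_left, Mt, mul_neg, neg_neg]

theorem dot3_h_νv (H : AdaptedPureFrontal f ν h ν₁) (p : ℝ × ℝ) :
    dot3 (h p) (pv ν p) = -(p.2 * N p) := by
  rw [H.νv_eq, dot3_smul_right, Nt1, mul_neg, neg_neg]

end Frame

section Smoothness

theorem contDiffAt_Et (H : AdaptedPureFrontal f ν h ν₁) : ContDiffAt ℝ ∞ E p :=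
  have hf := H.smooth_f.contDiffAt (x := p)
  contDiffAt_dot3 (contDiffAt_pu hf) (contDiffAt_pu hf)

theorem contDiffAt_Ft (H : AdaptedPureFrontal f ν h ν₁) : ContDiffAt ℝ ∞ F p :=
  contDiffAt_dot3 (contDiffAt_pu H.smooth_f.contDiffAt) H.smooth_h.contDiffAt

theorem contDiffAt_Gt (H : AdaptedPureFrontal f ν h ν₁) : ContDiffAt ℝ ∞ G p :=
  contDiffAt_dot3 H.smooth_h.contDiffAt H.smooth_h.contDiffAt

theorem contDiffAt_Lt (H : AdaptedPureFrontal f ν h ν₁) : ContDiffAt ℝ ∞ L p :=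
  (contDiffAt_dot3 (contDiffAt_pu H.smooth_f.contDiffAt)
    (contDiffAt_pu H.smooth_ν.contDiffAt)).neg

theorem contDiffAt_Mt (H : AdaptedPureFrontal f ν h ν₁) : ContDiffAt ℝ ∞ M p :=
  (contDiffAt_dot3 H.smooth_h.contDiffAt (contDiffAt_pu H.smooth_ν.contDiffAt)).neg

theorem contDiffAt_Nt1 (H : AdaptedPureFrontal f ν h ν₁) : ContDiffAt ℝ ∞ N p :=
  (contDiffAt_dot3 H.smooth_h.contDiffAt H.smooth_ν₁.contDiffAt).neg

theorem contDiffAt_Hm (H : AdaptedPureFrontal f ν h ν₁) : ContDiffAt ℝ ∞ 𝓗 p :=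
  have hdet := H.contDiffAt_Et.mul H.contDiffAt_Gt |>.sub (H.contDiffAt_Ft.pow 2)
  (((H.contDiffAt_Et.mul H.contDiffAt_Nt1).sub
    ((contDiffAt_const.mul H.contDiffAt_Ft).mul H.contDiffAt_Mt)).add
    (H.contDiffAt_Gt.mul H.contDiffAt_Lt)).div (contDiffAt_const.mul hdet)
    (mul_ne_zero two_ne_zero (H.metric_det_ne_zero p))

theorem contDiffAt_disc (H : AdaptedPureFrontal f ν h ν₁) :
    ContDiffAt ℝ ∞ (fun q => 𝓗 q ^ 2 - 𝓚 q) p :=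
  have hK : ContDiffAt ℝ ∞ 𝓚 p :=
    ((H.contDiffAt_Lt.mul H.contDiffAt_Nt1).sub (H.contDiffAt_Mt.pow 2)).div
      ((H.contDiffAt_Et.mul H.contDiffAt_Gt).sub (H.contDiffAt_Ft.pow 2)) (H.metric_det_ne_zero p)
  (H.contDiffAt_Hm.pow 2).sub hK

theorem contDiffAt_kap (H : AdaptedPureFrontal f ν h ν₁) (hHK : 0 < 𝓗 p ^ 2 - 𝓚 p) :
    ContDiffAt ℝ ∞ κ p :=
  H.contDiffAt_Hm.add (contDiffAt_const.mul (H.contDiffAt_disc.sqrt hHK.ne'))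

theorem contDiffAt_rho (H : AdaptedPureFrontal f ν h ν₁) (hHK : 0 < 𝓗 p ^ 2 - 𝓚 p)
    (hκ : κ p ≠ 0) : ContDiffAt ℝ ∞ ρ p :=
  (H.contDiffAt_kap hHK).inv hκ

theorem contDiffAt_Cf (H : AdaptedPureFrontal f ν h ν₁) (hHK : 0 < 𝓗 p ^ 2 - 𝓚 p)
    (hκ : κ p ≠ 0) : ContDiffAt ℝ ∞ C p :=
  H.smooth_f.contDiffAt.add ((H.contDiffAt_rho hHK hκ).smul H.smooth_ν.contDiffAt)

theorem contDiffAt_V2c (H : AdaptedPureFrontal f ν h ν₁) (hHK : 0 < 𝓗 p ^ 2 - 𝓚 p) :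
    ContDiffAt ℝ ∞ V₂ p :=
  H.contDiffAt_Lt.sub ((H.contDiffAt_kap hHK).mul H.contDiffAt_Et)

theorem contDiffAt_VD_kap (H : AdaptedPureFrontal f ν h ν₁) (hHK : 0 < 𝓗 p ^ 2 - 𝓚 p) :
    ContDiffAt ℝ ∞ (V κ) p := by
  have hκ := H.contDiffAt_kap (ε := ε) hHK
  have hV₁ : ContDiffAt ℝ ∞ V₁ p :=
    (contDiffAt_snd.mul (H.contDiffAt_Mt.sub (hκ.mul H.contDiffAt_Ft))).neg
  exact (hV₁.smul (contDiffAt_pu hκ)).add ((H.contDiffAt_V2c hHK).smul (contDiffAt_pv hκ))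

theorem contDiffAt_xj (H : AdaptedPureFrontal f ν h ν₁) (hHK : 0 < 𝓗 p ^ 2 - 𝓚 p) :
    ContDiffAt ℝ ∞ 𝐱 p :=
  (((H.contDiffAt_Mt.sub ((H.contDiffAt_kap hHK).mul H.contDiffAt_Ft)).neg).smul
    (contDiffAt_pu H.smooth_f.contDiffAt)).add
    ((H.contDiffAt_V2c hHK).smul H.smooth_h.contDiffAt)

theorem contDiffAt_ej (H : AdaptedPureFrontal f ν h ν₁) (hHK : 0 < 𝓗 p ^ 2 - 𝓚 p)
    (hx : 𝐱 p ≠ 0) : ContDiffAt ℝ ∞ 𝐞 p := by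
  have hx' := H.contDiffAt_xj (ε := ε) hHK
  have hpos := dot3_self_pos hx
  have hnorm : ContDiffAt ℝ ∞ (fun q => norm3 (𝐱 q)) p :=
    (contDiffAt_dot3 hx' hx').sqrt hpos.ne'
  exact (hnorm.inv (Real.sqrt_pos.mpr hpos).ne').smul hx'

theorem eventually_disc_pos_and_kap_ne_zero (H : AdaptedPureFrontal f ν h ν₁)
    (hHK : 0 < 𝓗 p ^ 2 - 𝓚 p) (hκ : κ p ≠ 0) :
    ∀ᶠ q in 𝓝 p, 0 < 𝓗 q ^ 2 - 𝓚 q ∧ κ q ≠ 0 :=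
  (continuousAt_const.eventually_lt H.contDiffAt_disc.continuousAt hHK).and
    ((H.contDiffAt_kap hHK).continuousAt.eventually_ne hκ)

end Smoothness

section PrincipalDirection

theorem kap_char_eq (H : AdaptedPureFrontal f ν h ν₁) (hε : ε = 1 ∨ ε = -1)
    (hHK : 0 ≤ 𝓗 p ^ 2 - 𝓚 p) :
    (L p - κ p * E p) * (N p - κ p * G p) = (M p - κ p * F p) ^ 2 := by
  have hdet := H.metric_det_ne_zero p
  have hK : 𝓚 p * (E p * G p - F p ^ 2) = L p * N p - M p ^ 2 := div_mul_cancel₀ _ hdet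
  have hH : 𝓗 p * (2 * (E p * G p - F p ^ 2)) = E p * N p - 2 * F p * M p + G p * L p :=
    div_mul_cancel₀ _ (mul_ne_zero two_ne_zero hdet)
  have hquad : κ p ^ 2 - 2 * 𝓗 p * κ p + 𝓚 p = 0 := by
    have hε2 : ε ^ 2 = 1 := sq_eq_one_iff.mpr hε
    rw [kap]
    linear_combination ε ^ 2 * Real.sq_sqrt hHK + (𝓗 p ^ 2 - 𝓚 p) * hε2
  linear_combination (E p * G p - F p ^ 2) * hquad + κ p * hH - hK

/-- Rodrigues' formula. -/
theorem VD_ν_eq_neg_kap_smul_VD_f (H : AdaptedPureFrontal f ν h ν₁) (hε : ε = 1 ∨ ε = -1)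
    (hHK : 0 ≤ 𝓗 p ^ 2 - 𝓚 p) : V ν p = -κ p • V f p := by
  have hdot (a : R3) (g : ℝ × ℝ → R3) :
      dot3 a (V g p) = V₁ p * dot3 a (pu g p) + V₂ p * dot3 a (pv g p) := by
    rw [VD, dot3_add_right, dot3_smul_right, dot3_smul_right]
  have hfu_fv : dot3 (pu f p) (pv f p) = p.2 * F p := by rw [H.fv_eq, dot3_smul_right, Ft]
  have hh_fv : dot3 (h p) (pv f p) = p.2 * G p := by rw [H.fv_eq, dot3_smul_right, Gt]
  have hfu_νu : dot3 (pu f p) (pu ν p) = -L p := (neg_neg _).symm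
  have hh_νu : dot3 (h p) (pu ν p) = -M p := (neg_neg _).symm
  have hh_fu : dot3 (h p) (pu f p) = F p := dot3_comm _ _
  have hfu_fu : dot3 (pu f p) (pu f p) = E p := rfl
  refine H.eq_of_forall_dot3_frame_eq (p := p) ?_ ?_ ?_ <;> rw [dot3_smul_right, hdot, hdot]
  · rw [hfu_νu, H.dot3_fu_νv, hfu_fu, hfu_fv, V1c, V2c]
    ring
  · rw [hh_νu, H.dot3_h_νv, hh_fu, hh_fv, V1c, V2c]
    linear_combination -p.2 * H.kap_char_eq hε hHK
  · rw [dot3_comm _ (pu f p), dot3_comm _ (pv f p), H.orth_fu_ν, H.orth_fv_ν, pu, pv,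
      H.dot3_ν_fderiv_ν, H.dot3_ν_fderiv_ν]
    ring

theorem fderiv_Cf_apply (H : AdaptedPureFrontal f ν h ν₁) (hHK : 0 < 𝓗 p ^ 2 - 𝓚 p)
    (hκ : κ p ≠ 0) (w : ℝ × ℝ) :
    fderiv ℝ C p w =
      fderiv ℝ f p w + ρ p • fderiv ℝ ν p w + fderiv ℝ ρ p w • ν p := by
  have hρ := (H.contDiffAt_rho hHK hκ).differentiableAt (by simp)
  have hC := (H.smooth_f.differentiable (by simp) p).hasFDerivAt.add
    (hρ.hasFDerivAt.smul H.differentiableAt_ν.hasFDerivAt)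
  refine (congrArg (· w) hC.fderiv).trans ?_
  simp [add_assoc]

theorem VD_Cf (H : AdaptedPureFrontal f ν h ν₁) (hε : ε = 1 ∨ ε = -1)
    (hHK : 0 < 𝓗 p ^ 2 - 𝓚 p) (hκ : κ p ≠ 0) : V C p = V ρ p • ν p := by
  have hproduct : V C p = V f p + ρ p • V ν p + V ρ p • ν p := by
    simp only [VD, pu, pv, H.fderiv_Cf_apply hHK hκ, smul_eq_mul]
    module
  have hcancel : V f p + ρ p • V ν p = 0 := by
    rw [H.VD_ν_eq_neg_kap_smul_VD_f hε hHK.le, smul_smul, rho, mul_neg, inv_mul_cancel₀ hκ,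
      neg_one_smul, add_neg_cancel]
  rw [hproduct, hcancel, zero_add]

theorem fderiv_rho_apply (H : AdaptedPureFrontal f ν h ν₁) (hHK : 0 < 𝓗 p ^ 2 - 𝓚 p)
    (hκ : κ p ≠ 0) (w : ℝ × ℝ) : fderiv ℝ ρ p w = -(κ p ^ 2)⁻¹ * fderiv ℝ κ p w := by
  have hκ' := ((H.contDiffAt_kap (ε := ε) hHK).differentiableAt (by simp)).hasFDerivAt
  exact congrArg (· w) ((hasDerivAt_inv hκ).comp_hasFDerivAt p hκ').fderiv

theorem VD_kap (H : AdaptedPureFrontal f ν h ν₁) (hHK : 0 < 𝓗 p ^ 2 - 𝓚 p)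
    (hκ : κ p ≠ 0) : V κ p = -κ p ^ 2 * V ρ p := by
  simp only [VD, pu, pv, H.fderiv_rho_apply hHK hκ, smul_eq_mul]
  field_simp
  ring

theorem focal_gram_det (H : AdaptedPureFrontal f ν h ν₁) (hε : ε = 1 ∨ ε = -1)
    (hHK : 0 < 𝓗 p ^ 2 - 𝓚 p) (hκ : κ p ≠ 0) :
    V₂ p ^ 2 * (EC f ν h ν₁ ε p * GC f ν h ν₁ ε p - FC f ν h ν₁ ε p ^ 2) =
      V ρ p ^ 2 * dot3 (pu f p + ρ p • pu ν p) (pu f p + ρ p • pu ν p) := by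
  have htangent : dot3 (pu f p + ρ p • pu ν p) (ν p) = 0 := by
    rw [dot3_add_left, dot3_smul_left, H.orth_fu_ν, dot3_comm, pu, H.dot3_ν_fderiv_ν]
    ring
  have hCu : pu C p = (pu f p + ρ p • pu ν p) + pu ρ p • ν p := H.fderiv_Cf_apply hHK hκ _
  refine (dot3_gram_of_smul_add_smul_eq (H.VD_Cf hε hHK hκ)).trans ?_
  simp only [hCu, dot3_add_left _ (pu ρ p • ν p), dot3_add_right _ _ (pu ρ p • ν p),
    dot3_smul_left (pu ρ p), dot3_smul_right (pu ρ p), H.unit_ν, htangent,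
    dot3_comm (ν p) (pu f p + ρ p • pu ν p)]
  ring

theorem fu_add_rho_smul_νu_ne_zero (hκ : κ p ≠ 0) (hV₂ : V₂ p ≠ 0) :
    pu f p + ρ p • pu ν p ≠ 0 := by
  intro hzero
  have hcomponent : dot3 (pu f p) (pu f p + ρ p • pu ν p) = -(ρ p * V₂ p) := by
    have hfu_νu : dot3 (pu f p) (pu ν p) = -L p := (neg_neg _).symm
    rw [dot3_add_right, dot3_smul_right, hfu_νu, rho, V2c, Et]
    field_simp
    ring
  rw [hzero, dot3_zero_right, eq_comm, neg_eq_zero] at hcomponent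
  exact mul_ne_zero (inv_ne_zero hκ) hV₂ hcomponent

end PrincipalDirection

section SingularCurve

theorem pv_pu_f_axis (H : AdaptedPureFrontal f ν h ν₁) (u : ℝ) : pv (pu f) (u, 0) = 0 :=
  pv_pu_eq_zero_of_pv_axis_eq_zero (H.smooth_f.contDiffAt.of_le (by norm_cast))
    (.of_forall fun s => by simp [H.fv_eq])

theorem pv_ν_axis (H : AdaptedPureFrontal f ν h ν₁) (u : ℝ) : pv ν (u, 0) = 0 := by
  simp [H.νv_eq]

theorem pv_pu_ν_axis (H : AdaptedPureFrontal f ν h ν₁) (u : ℝ) : pv (pu ν) (u, 0) = 0 :=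
  pv_pu_eq_zero_of_pv_axis_eq_zero (H.smooth_ν.contDiffAt.of_le (by norm_cast))
    (.of_forall H.pv_ν_axis)

theorem pv_Et_axis (H : AdaptedPureFrontal f ν h ν₁) (u : ℝ) : pv E (u, 0) = 0 := by
  refine (fderiv_dot3 H.differentiableAt_pu_f H.differentiableAt_pu_f _).trans ?_
  rw [← pv, H.pv_pu_f_axis, dot3_zero_left, dot3_zero_right, add_zero]

theorem pv_Lt_axis (H : AdaptedPureFrontal f ν h ν₁) (u : ℝ) : pv L (u, 0) = 0 := by
  have hL : pv L (u, 0) = -pv (fun q => dot3 (pu f q) (pu ν q)) (u, 0) :=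
    pv_fun_neg _ _
  rw [hL, pv, fderiv_dot3 H.differentiableAt_pu_f H.differentiableAt_pu_ν, ← pv, ← pv,
    H.pv_pu_f_axis, H.pv_pu_ν_axis, dot3_zero_left, dot3_zero_right, add_zero, neg_zero]

theorem pv_h_axis (H : AdaptedPureFrontal f ν h ν₁) (u : ℝ) :
    pv h (u, 0) = pv F (u, 0) • pu f (u, 0) + (pv G (u, 0) / 2) • h (u, 0) := by
  have hF : pv F (u, 0) = dot3 (pu f (u, 0)) (pv h (u, 0)) := by
    refine (fderiv_dot3 H.differentiableAt_pu_f H.differentiableAt_h _).trans ?_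
    rw [← pv, ← pv, H.pv_pu_f_axis, dot3_zero_left, add_zero]
  have hG : pv G (u, 0) = 2 * dot3 (h (u, 0)) (pv h (u, 0)) := by
    refine (fderiv_dot3 H.differentiableAt_h H.differentiableAt_h _).trans ?_
    rw [← pv, dot3_comm (pv h (u, 0)), two_mul]
  have hνh : dot3 (ν (u, 0)) (pv h (u, 0)) = 0 := by
    have hperp (q : ℝ × ℝ) : dot3 (ν q) (h q) = 0 := (dot3_comm _ _).trans (H.dot3_h_ν q)
    rw [pv, dot3_fderiv_eq_neg_of_const H.differentiableAt_ν H.differentiableAt_h hperp, ← pv,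
      H.pv_ν_axis, dot3_zero_left, neg_zero]
  refine H.eq_of_forall_dot3_frame_eq (p := (u, 0)) ?_ ?_ ?_ <;>
    rw [dot3_add_right, dot3_smul_right, dot3_smul_right]
  · rw [← hF, H.adapted_fu, H.adapted_fu_h]
    ring
  · rw [hG, dot3_comm _ (pu f (u, 0)), H.adapted_h, H.adapted_fu_h]
    ring
  · rw [hνh, dot3_comm _ (pu f (u, 0)), dot3_comm _ (h (u, 0)), H.orth_fu_ν, H.dot3_h_ν]
    ring

theorem pv_Mt_axis (H : AdaptedPureFrontal f ν h ν₁) (u : ℝ) :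
    pv M (u, 0) = pv F (u, 0) * L (u, 0) + pv G (u, 0) / 2 * M (u, 0) := by
  have hM : pv M (u, 0) = -pv (fun q => dot3 (h q) (pu ν q)) (u, 0) :=
    pv_fun_neg _ _
  rw [hM, pv, fderiv_dot3 H.differentiableAt_h H.differentiableAt_pu_ν, ← pv, ← pv,
    H.pv_pu_ν_axis, H.pv_h_axis, dot3_zero_right, dot3_add_left, dot3_smul_left, dot3_smul_left,
    Lt, Mt]
  ring

/-- Differentiate `kap_char_eq` in `v`. -/
theorem pv_kap_axis_mul (H : AdaptedPureFrontal f ν h ν₁) (hε : ε = 1 ∨ ε = -1)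
    (hHK : 0 < 𝓗 (u, 0) ^ 2 - 𝓚 (u, 0)) :
    (L (u, 0) + N (u, 0) - 2 * κ (u, 0)) * pv κ (u, 0) =
      (L (u, 0) - κ (u, 0)) * (rc f ν h ν₁ u / 24) := by
  have hE := hasDerivAt_pv (H.contDiffAt_Et.differentiableAt (by simp) (x := (u, 0)))
  have hF := hasDerivAt_pv (H.contDiffAt_Ft.differentiableAt (by simp) (x := (u, 0)))
  have hG := hasDerivAt_pv (H.contDiffAt_Gt.differentiableAt (by simp) (x := (u, 0)))
  have hL := hasDerivAt_pv (H.contDiffAt_Lt.differentiableAt (by simp) (x := (u, 0)))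
  have hM := hasDerivAt_pv (H.contDiffAt_Mt.differentiableAt (by simp) (x := (u, 0)))
  have hN := hasDerivAt_pv (H.contDiffAt_Nt1.differentiableAt (by simp) (x := (u, 0)))
  have hκ := hasDerivAt_pv ((H.contDiffAt_kap (ε := ε) hHK).differentiableAt (by simp))
  have hchar : ∀ᶠ t in 𝓝 (0 : ℝ),
      (L (u, t) - κ (u, t) * E (u, t)) * (N (u, t) - κ (u, t) * G (u, t)) =
        (M (u, t) - κ (u, t) * F (u, t)) ^ 2 := by
    have hdisc : ∀ᶠ q in 𝓝 (u, (0 : ℝ)), 0 < 𝓗 q ^ 2 - 𝓚 q :=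
      continuousAt_const.eventually_lt H.contDiffAt_disc.continuousAt hHK
    filter_upwards [(Continuous.prodMk_right u).tendsto 0 |>.eventually hdisc] with t ht
    exact H.kap_char_eq hε ht.le
  have hderiv := (((hL.sub (hκ.mul hE)).mul (hN.sub (hκ.mul hG))).congr_of_eventuallyEq
    (hchar.mono fun _ ht => ht.symm)).unique ((hM.sub (hκ.mul hF)).pow 2)
  have hchar0 := H.kap_char_eq hε hHK.le
  have hE0 : E (u, 0) = 1 := H.adapted_fu u
  have hF0 : F (u, 0) = 0 := H.adapted_fu_h u
  have hG0 : G (u, 0) = 1 := H.adapted_h u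
  simp only [H.pv_Lt_axis, H.pv_Et_axis, H.pv_Mt_axis, hE0, hF0, hG0, Pi.sub_apply, Pi.mul_apply,
    Nat.add_one_sub_one, Nat.cast_ofNat] at hderiv hchar0
  rw [rc]
  linear_combination -hderiv + pv G (u, 0) * hchar0

theorem pv_kap_axis_eq_zero (H : AdaptedPureFrontal f ν h ν₁) (hε : ε = 1 ∨ ε = -1)
    (hHK : 0 < 𝓗 (u, 0) ^ 2 - 𝓚 (u, 0)) (hrc : rc f ν h ν₁ u = 0) : pv κ (u, 0) = 0 := by
  have hsqrt := (Real.sqrt_pos.mpr hHK).ne'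
  have hgap : L (u, 0) + N (u, 0) - 2 * κ (u, 0) =
      -(2 * ε * √(𝓗 (u, 0) ^ 2 - 𝓚 (u, 0))) := by
    have hE0 : E (u, 0) = 1 := H.adapted_fu u
    have hF0 : F (u, 0) = 0 := H.adapted_fu_h u
    have hG0 : G (u, 0) = 1 := H.adapted_h u
    have hmean : 2 * 𝓗 (u, 0) = L (u, 0) + N (u, 0) := by
      rw [Hm, hE0, hF0, hG0]
      ring
    rw [kap]
    linear_combination -hmean
  have hε0 : ε ≠ 0 := by rcases hε with rfl | rfl <;> norm_num
  have hproduct := H.pv_kap_axis_mul hε hHK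
  rw [hrc, zero_div, mul_zero, hgap] at hproduct
  exact (mul_eq_zero.mp hproduct).resolve_left
    (neg_ne_zero.mpr (mul_ne_zero (mul_ne_zero two_ne_zero hε0) hsqrt))

theorem pv_Cf_axis_eq_zero (H : AdaptedPureFrontal f ν h ν₁) (hε : ε = 1 ∨ ε = -1)
    (hHK : 0 < 𝓗 (u, 0) ^ 2 - 𝓚 (u, 0)) (hκ : κ (u, 0) ≠ 0) (hrc : rc f ν h ν₁ u = 0) :
    pv C (u, 0) = 0 := by
  have hfv : pv f (u, 0) = 0 := by simp [H.fv_eq]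
  have hρv : pv ρ (u, 0) = 0 := by
    rw [pv, H.fderiv_rho_apply hHK hκ, ← pv, H.pv_kap_axis_eq_zero hε hHK hrc, mul_zero]
  rw [pv, H.fderiv_Cf_apply hHK hκ, ← pv, ← pv, ← pv, hfv, H.pv_ν_axis, hρv]
  simp

theorem pv_xj_axis (H : AdaptedPureFrontal f ν h ν₁) (hε : ε = 1 ∨ ε = -1)
    (hHK : 0 < 𝓗 (u, 0) ^ 2 - 𝓚 (u, 0)) (hrc : rc f ν h ν₁ u = 0) :
    pv 𝐱 (u, 0) = (pv G (u, 0) / 2) • 𝐱 (u, 0) := by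
  have hE := hasDerivAt_pv (H.contDiffAt_Et.differentiableAt (by simp) (x := (u, 0)))
  have hF := hasDerivAt_pv (H.contDiffAt_Ft.differentiableAt (by simp) (x := (u, 0)))
  have hL := hasDerivAt_pv (H.contDiffAt_Lt.differentiableAt (by simp) (x := (u, 0)))
  have hM := hasDerivAt_pv (H.contDiffAt_Mt.differentiableAt (by simp) (x := (u, 0)))
  have hκ := hasDerivAt_pv ((H.contDiffAt_kap (ε := ε) hHK).differentiableAt (by simp))
  have hfu := hasDerivAt_pv (H.differentiableAt_pu_f (p := (u, 0)))
  have hh := hasDerivAt_pv (H.differentiableAt_h (p := (u, 0)))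
  have hx := hasDerivAt_pv ((H.contDiffAt_xj (ε := ε) hHK).differentiableAt (by simp))
  rw [hx.unique (((hM.sub (hκ.mul hF)).neg.smul hfu).add ((hL.sub (hκ.mul hE)).smul hh))]
  have hE0 : E (u, 0) = 1 := H.adapted_fu u
  have hF0 : F (u, 0) = 0 := H.adapted_fu_h u
  simp only [xj, hE0, hF0, H.pv_Et_axis, H.pv_Lt_axis, H.pv_Mt_axis, H.pv_pu_f_axis, H.pv_h_axis,
    H.pv_kap_axis_eq_zero hε hHK hrc, Pi.neg_apply, Pi.sub_apply, Pi.mul_apply]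
  module

theorem xj_ne_zero (H : AdaptedPureFrontal f ν h ν₁) (hV₂ : V₂ p ≠ 0) : 𝐱 p ≠ 0 := by
  intro hzero
  exact hV₂ (LinearIndependent.pair_iff.mp (H.linearIndependent_fu_h p) _ _ hzero).2

theorem pv_ej_axis_eq_zero (H : AdaptedPureFrontal f ν h ν₁) (hε : ε = 1 ∨ ε = -1)
    (hHK : 0 < 𝓗 (u, 0) ^ 2 - 𝓚 (u, 0)) (hrc : rc f ν h ν₁ u = 0) (hV₂ : V₂ (u, 0) ≠ 0) :
    pv 𝐞 (u, 0) = 0 := by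
  have hx0 := H.xj_ne_zero hV₂
  have hx := hasDerivAt_pv ((H.contDiffAt_xj (ε := ε) hHK).differentiableAt (by simp))
  have he := hasDerivAt_pv ((H.contDiffAt_ej hHK hx0).differentiableAt (by simp))
  rw [H.pv_xj_axis hε hHK hrc] at hx
  exact he.unique (hasDerivAt_normalize_of_deriv_parallel hx hx0)

end SingularCurve

section FirstOrderRidge

theorem VD_axis {W : Type*} [NormedAddCommGroup W] [NormedSpace ℝ W] (g : ℝ × ℝ → W) (u : ℝ) :
    V g (u, 0) = V₂ (u, 0) • pv g (u, 0) := by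
  simp [VD, V1c]

theorem V2c_axis_ne_zero_of_VD_ne_zero {W : Type*} [NormedAddCommGroup W] [NormedSpace ℝ W]
    {g : ℝ × ℝ → W} (hg : V g (u, 0) ≠ 0) : V₂ (u, 0) ≠ 0 :=
  left_ne_zero_of_smul (VD_axis g u ▸ hg)

theorem eventually_axis_disc_pos_and_kap_ne_zero (H : AdaptedPureFrontal f ν h ν₁)
    (hHK : 0 < 𝓗 (u, 0) ^ 2 - 𝓚 (u, 0)) (hκ : κ (u, 0) ≠ 0) :
    ∀ᶠ s in 𝓝 u, 0 < 𝓗 (s, 0) ^ 2 - 𝓚 (s, 0) ∧ κ (s, 0) ≠ 0 :=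
  (Continuous.prodMk_left (0 : ℝ)).continuousAt.eventually
    (H.eventually_disc_pos_and_kap_ne_zero hHK hκ)

theorem snd_isBigO_VD_rho (H : AdaptedPureFrontal f ν h ν₁) (hε : ε = 1 ∨ ε = -1)
    (hHK : 0 < 𝓗 (u, 0) ^ 2 - 𝓚 (u, 0)) (hκ : κ (u, 0) ≠ 0)
    (hrc : ∀ᶠ s in 𝓝 u, rc f ν h ν₁ s = 0) (hridge : V (V κ) (u, 0) ≠ 0) :
    Prod.snd =O[𝓝 (u, 0)] V ρ := by
  have haxis : ∀ᶠ s in 𝓝 u, V κ (s, 0) = 0 := by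
    filter_upwards [H.eventually_axis_disc_pos_and_kap_ne_zero hHK hκ, hrc] with s hs hrcs
    rw [VD_axis, H.pv_kap_axis_eq_zero hε hs.1 hrcs, smul_zero]
  have htransverse : pv (V κ) (u, 0) ≠ 0 := right_ne_zero_of_smul (VD_axis (V κ) u ▸ hridge)
  have hsnd : Prod.snd =O[𝓝 (u, 0)] V κ :=
    snd_isBigO_of_axis_eq_zero ((H.contDiffAt_VD_kap hHK).hasStrictFDerivAt (by simp)) haxis
      htransverse
  have hbounded : (fun p => -κ p ^ 2) =O[𝓝 (u, 0)] fun _ => (1 : ℝ) :=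
    ((H.contDiffAt_kap hHK).continuousAt.pow 2).neg.isBigO_one ℝ
  refine hsnd.trans ?_
  refine (hbounded.mul (isBigO_refl (V ρ) _)).congr' ?_ (.of_forall fun p => one_mul _)
  filter_upwards [H.eventually_disc_pos_and_kap_ne_zero hHK hκ] with p hp
  exact (H.VD_kap hp.1 hp.2).symm

theorem eventually_VD_rho_eq_zero_iff (H : AdaptedPureFrontal f ν h ν₁) (hε : ε = 1 ∨ ε = -1)
    (hHK : 0 < 𝓗 (u, 0) ^ 2 - 𝓚 (u, 0)) (hκ : κ (u, 0) ≠ 0)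
    (hrc : ∀ᶠ s in 𝓝 u, rc f ν h ν₁ s = 0) (hridge : V (V κ) (u, 0) ≠ 0) :
    ∀ᶠ p in 𝓝 (u, (0 : ℝ)), V ρ p = 0 ↔ p.2 = 0 := by
  have hrc' : ∀ᶠ p in 𝓝 (u, (0 : ℝ)), rc f ν h ν₁ p.1 = 0 :=
    (continuous_fst.tendsto (u, (0 : ℝ))).eventually hrc
  filter_upwards [(H.snd_isBigO_VD_rho hε hHK hκ hrc hridge).eq_zero_imp, hrc',
    H.eventually_disc_pos_and_kap_ne_zero hHK hκ] with ⟨s, t⟩ hsnd hrcs hs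
  refine ⟨hsnd, ?_⟩
  rintro rfl
  rw [VD_axis, pv, H.fderiv_rho_apply hs.1 hs.2, ← pv, H.pv_kap_axis_eq_zero hε hs.1 hrcs,
    mul_zero, smul_zero]

theorem eventually_axis_pv_ej_eq_zero (H : AdaptedPureFrontal f ν h ν₁) (hε : ε = 1 ∨ ε = -1)
    (hHK : 0 < 𝓗 (u, 0) ^ 2 - 𝓚 (u, 0)) (hrc : ∀ᶠ s in 𝓝 u, rc f ν h ν₁ s = 0)
    (hV₂ : V₂ (u, 0) ≠ 0) :
    ∀ᶠ s in 𝓝 u, pv 𝐞 (s, 0) = 0 := by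
  have haxis : ContinuousAt (fun s : ℝ => (s, (0 : ℝ))) u :=
    (Continuous.prodMk_left (0 : ℝ)).continuousAt
  filter_upwards [hrc,
    haxis.eventually (continuousAt_const.eventually_lt H.contDiffAt_disc.continuousAt hHK),
    haxis.eventually ((H.contDiffAt_V2c hHK).continuousAt.eventually_ne hV₂)] with s hrcs hs hV₂s
  exact H.pv_ej_axis_eq_zero hε hs hrcs hV₂s

theorem eventually_VD_ej_eq_zero (H : AdaptedPureFrontal f ν h ν₁) (hε : ε = 1 ∨ ε = -1)
    (hHK : 0 < 𝓗 (u, 0) ^ 2 - 𝓚 (u, 0)) (hrc : ∀ᶠ s in 𝓝 u, rc f ν h ν₁ s = 0)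
    (hV₂ : V₂ (u, 0) ≠ 0) : ∀ᶠ p in 𝓝 (u, (0 : ℝ)), p.2 = 0 → V 𝐞 p = 0 := by
  filter_upwards [continuousAt_fst.eventually (H.eventually_axis_pv_ej_eq_zero hε hHK hrc hV₂)]
  rintro ⟨s, _⟩ hs rfl
  rw [VD_axis, hs, smul_zero]

theorem sq_snd_isBigO_focal_gram_det (H : AdaptedPureFrontal f ν h ν₁) (hε : ε = 1 ∨ ε = -1)
    (hHK : 0 < 𝓗 (u, 0) ^ 2 - 𝓚 (u, 0)) (hκ : κ (u, 0) ≠ 0)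
    (hrc : ∀ᶠ s in 𝓝 u, rc f ν h ν₁ s = 0) (hridge : V (V κ) (u, 0) ≠ 0) :
    (fun p => p.2 ^ 2) =O[𝓝 (u, 0)] fun p =>
      EC f ν h ν₁ ε p * GC f ν h ν₁ ε p - FC f ν h ν₁ ε p ^ 2 := by
  let w p := pu f p + ρ p • pu ν p
  have hw : ContinuousAt (fun p => dot3 (w p) (w p)) (u, 0) := by
    have hw' : ContDiffAt ℝ ∞ w (u, 0) := (contDiffAt_pu H.smooth_f.contDiffAt).add
      ((H.contDiffAt_rho hHK hκ).smul (contDiffAt_pu H.smooth_ν.contDiffAt))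
    exact (contDiffAt_dot3 hw' hw').continuousAt
  have hw0 : dot3 (w (u, 0)) (w (u, 0)) ≠ 0 :=
    (dot3_self_pos (fu_add_rho_smul_νu_ne_zero hκ (V2c_axis_ne_zero_of_VD_ne_zero hridge))).ne'
  have hbounded : (fun p => V₂ p ^ 2 * (dot3 (w p) (w p))⁻¹) =O[𝓝 (u, 0)] fun _ => (1 : ℝ) :=
    (((H.contDiffAt_V2c hHK).continuousAt.pow 2).mul (hw.inv₀ hw0)).isBigO_one ℝ
  refine ((H.snd_isBigO_VD_rho hε hHK hκ hrc hridge).pow 2).trans ?_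
  refine (hbounded.mul (isBigO_refl _ _)).congr' ?_ (.of_forall fun p => one_mul _)
  filter_upwards [H.eventually_disc_pos_and_kap_ne_zero hHK hκ, hw.eventually_ne hw0] with p hp hwp
  rw [mul_right_comm, H.focal_gram_det hε hp.1 hp.2, mul_assoc, mul_inv_cancel₀ hwp, mul_one]

theorem pv_Cf_isBigO_snd (H : AdaptedPureFrontal f ν h ν₁) (hε : ε = 1 ∨ ε = -1)
    (hHK : 0 < 𝓗 (u, 0) ^ 2 - 𝓚 (u, 0)) (hκ : κ (u, 0) ≠ 0)
    (hrc : ∀ᶠ s in 𝓝 u, rc f ν h ν₁ s = 0) : pv C =O[𝓝 (u, 0)] Prod.snd := by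
  refine isBigO_snd_of_axis_eq_zero
    ((contDiffAt_pv (H.contDiffAt_Cf hHK hκ)).hasStrictFDerivAt (by simp)) ?_
  filter_upwards [H.eventually_axis_disc_pos_and_kap_ne_zero hHK hκ, hrc] with s hs hrcs
  exact H.pv_Cf_axis_eq_zero hε hs.1 hs.2 hrcs

theorem pv_ej_isBigO_snd (H : AdaptedPureFrontal f ν h ν₁) (hε : ε = 1 ∨ ε = -1)
    (hHK : 0 < 𝓗 (u, 0) ^ 2 - 𝓚 (u, 0)) (hrc : ∀ᶠ s in 𝓝 u, rc f ν h ν₁ s = 0)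
    (hV₂ : V₂ (u, 0) ≠ 0) : pv 𝐞 =O[𝓝 (u, 0)] Prod.snd :=
  isBigO_snd_of_axis_eq_zero
    ((contDiffAt_pv (H.contDiffAt_ej hHK (H.xj_ne_zero hV₂))).hasStrictFDerivAt (by simp))
    (H.eventually_axis_pv_ej_eq_zero hε hHK hrc hV₂)

theorem pu_Cf_isBigO_one (H : AdaptedPureFrontal f ν h ν₁) (hHK : 0 < 𝓗 p ^ 2 - 𝓚 p)
    (hκ : κ p ≠ 0) : pu C =O[𝓝 p] fun _ => (1 : ℝ) :=
  (contDiffAt_pu (H.contDiffAt_Cf hHK hκ)).continuousAt.isBigO_one ℝ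

theorem pu_ej_isBigO_one (H : AdaptedPureFrontal f ν h ν₁) (hHK : 0 < 𝓗 p ^ 2 - 𝓚 p)
    (hx : 𝐱 p ≠ 0) : pu 𝐞 =O[𝓝 p] fun _ => (1 : ℝ) :=
  (contDiffAt_pu (H.contDiffAt_ej hHK hx)).continuousAt.isBigO_one ℝ

theorem isBoundedUnder_KC (H : AdaptedPureFrontal f ν h ν₁) (hε : ε = 1 ∨ ε = -1)
    (hHK : 0 < 𝓗 (u, 0) ^ 2 - 𝓚 (u, 0)) (hκ : κ (u, 0) ≠ 0)
    (hrc : ∀ᶠ s in 𝓝 u, rc f ν h ν₁ s = 0) (hridge : V (V κ) (u, 0) ≠ 0) :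
    IsBoundedUnder (· ≤ ·) (𝓝 (u, 0)) fun p => |KC f ν h ν₁ ε p| := by
  have hV₂ := V2c_axis_ne_zero_of_VD_ne_zero hridge
  have hnumerator := isBigO_gauss_numerator (H.pu_Cf_isBigO_one hHK hκ)
    (H.pv_Cf_isBigO_snd hε hHK hκ hrc) (H.pu_ej_isBigO_one hHK (H.xj_ne_zero hV₂))
    (H.pv_ej_isBigO_snd hε hHK hrc hV₂)
  exact div_isBoundedUnder_of_isBigO
    (hnumerator.trans (H.sq_snd_isBigO_focal_gram_det hε hHK hκ hrc hridge))

theorem isBoundedUnder_HC (H : AdaptedPureFrontal f ν h ν₁) (hε : ε = 1 ∨ ε = -1)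
    (hHK : 0 < 𝓗 (u, 0) ^ 2 - 𝓚 (u, 0)) (hκ : κ (u, 0) ≠ 0)
    (hrc : ∀ᶠ s in 𝓝 u, rc f ν h ν₁ s = 0) (hridge : V (V κ) (u, 0) ≠ 0) :
    IsBoundedUnder (· ≤ ·) (𝓝 (u, 0)) fun p => |HC f ν h ν₁ ε p| := by
  have hV₂ := V2c_axis_ne_zero_of_VD_ne_zero hridge
  have hnumerator := isBigO_mean_numerator (H.pu_Cf_isBigO_one hHK hκ)
    (H.pv_Cf_isBigO_snd hε hHK hκ hrc) (H.pu_ej_isBigO_one hHK (H.xj_ne_zero hV₂))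
    (H.pv_ej_isBigO_snd hε hHK hrc hV₂)
  have hdenominator := H.sq_snd_isBigO_focal_gram_det hε hHK hκ hrc hridge
  exact div_isBoundedUnder_of_isBigO
    (hnumerator.trans (hdenominator.trans (isBigO_self_const_mul two_ne_zero _ _)))

end FirstOrderRidge

end AdaptedPureFrontal

theorem stmt_17_general {f ν h ν₁ : ℝ × ℝ → R3} (H : AdaptedPureFrontal f ν h ν₁) {ε : ℝ}
    (hε : ε = 1 ∨ ε = -1) (hHK : 0 < Hm f ν h ν₁ 0 ^ 2 - Kg f ν h ν₁ 0)
    (hκ : kap f ν h ν₁ ε 0 ≠ 0) (hrc : ∀ᶠ u in 𝓝 0, rc f ν h ν₁ u = 0)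
    (hridge : VD f ν h ν₁ ε (VD f ν h ν₁ ε (kap f ν h ν₁ ε)) 0 ≠ 0) :
    ∃ U ∈ 𝓝 (0 : ℝ × ℝ),
      (∀ p ∈ U, (VD f ν h ν₁ ε (rho f ν h ν₁ ε) p = 0 ↔ p.2 = 0)) ∧
      (∀ p ∈ U, p.2 = 0 → VD f ν h ν₁ ε (ej f ν h ν₁ ε) p = 0) ∧
      ∃ M : ℝ, ∀ p ∈ U, rankAt (Cf f ν h ν₁ ε) p = 2 →
        |KC f ν h ν₁ ε p| ≤ M ∧ |HC f ν h ν₁ ε p| ≤ M := by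
  have hsingular := H.eventually_VD_rho_eq_zero_iff hε hHK hκ hrc hridge
  have hpure := H.eventually_VD_ej_eq_zero hε hHK hrc
    (AdaptedPureFrontal.V2c_axis_ne_zero_of_VD_ne_zero hridge)
  obtain ⟨B, hB⟩ := (H.isBoundedUnder_KC hε hHK hκ hrc hridge).eventually_le
  obtain ⟨B', hB'⟩ := (H.isBoundedUnder_HC hε hHK hκ hrc hridge).eventually_le
  exact ⟨_, hsingular.and (hpure.and (hB.and hB')), fun p hp => hp.1, fun p hp => hp.2.1,
    max B B', fun p hp _ => ⟨le_max_of_le_left hp.2.2.1, le_max_of_le_right hp.2.2.2⟩⟩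

/-- if r_c ≡ 0 along the singular curve and 0 is a first order
V_j-ridge point, then near 0 the singular set of C_j is {v = 0}, it consists of
pure-frontal singular points of C_j, and the Gaussian and mean curvature of C_j are
bounded on the regular set near 0. -/
theorem stmt_17 (f ν h ν₁ : ℝ × ℝ → R3) (H : AdaptedPureFrontal f ν h ν₁)
    (ε : ℝ) (hε : ε = 1 ∨ ε = -1)
    (hHK : ∀ p : ℝ × ℝ, Hm f ν h ν₁ p ^ 2 - Kg f ν h ν₁ p > 0)
    (hκ : ∀ p : ℝ × ℝ, kap f ν h ν₁ ε p ≠ 0)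
    (hx : ∀ᶠ p in nhds (0 : ℝ × ℝ), xj f ν h ν₁ ε p ≠ 0)
    (hkt : kt h ν 0 ≠ 0)
    (hrc : ∀ᶠ u in nhds (0 : ℝ), rc f ν h ν₁ u = 0)
    (hridge : VD f ν h ν₁ ε (kap f ν h ν₁ ε) 0 = 0)
    (hridge1 : VD f ν h ν₁ ε (VD f ν h ν₁ ε (kap f ν h ν₁ ε)) 0 ≠ 0) :
    ∃ U ∈ nhds (0 : ℝ × ℝ),
      (∀ p ∈ U, (VD f ν h ν₁ ε (rho f ν h ν₁ ε) p = 0 ↔ p.2 = 0)) ∧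
      (∀ p ∈ U, p.2 = 0 → VD f ν h ν₁ ε (ej f ν h ν₁ ε) p = 0) ∧
      ∃ M : ℝ, ∀ p ∈ U, rankAt (Cf f ν h ν₁ ε) p = 2 →
        |KC f ν h ν₁ ε p| ≤ M ∧ |HC f ν h ν₁ ε p| ≤ M :=
  stmt_17_general H hε (hHK 0) (hκ 0) hrc hridge1
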